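/- (Forward Substitution Lemma, case 2.) If there are derivations (Γ, x:ᾱ);(Δ, x:⋃Δ') ⊢ M : β and Γ';Δ' ⊢! N : ᾱ in the multi-type system for the λI-calculus, where ᾱ is a non-empty multiset type and Δ ≍ Δ', then there is a derivation (Γ + Γ');(Δ ∨ Δ') ⊢ M[N/x] : β. -/

import Mathlib

set_option maxHeartbeats 1000000

/-! # λ-terms (named variables over ℕ) -/

inductive Lam : Type
  | var : ℕ → Lam
  | app : Lam → Lam → Lam
  | lam : ℕ → Lam → Lam
deriving DecidableEq

namespace Lam

/-- Free variables of a λ-term. -/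
def fv : Lam → Finset ℕ
  | var x => {x}
  | app M N => M.fv ∪ N.fv
  | lam x M => M.fv.erase x

/-- λI-terms: every abstraction `λx.M` satisfies `x ∈ fv M`. -/
def IsI : Lam → Prop
  | var _ => True
  | app M N => M.IsI ∧ N.IsI
  | lam x M => x ∈ M.fv ∧ M.IsI

/-- A variable not belonging to a given finite set. -/
def freshVar (s : Finset ℕ) : ℕ := (s.sup id) + 1

/-- Capture-avoiding simultaneous substitution (bound variables are freshened). -/
def substF : Lam → (ℕ → Lam) → Lam
  | var x, σ => σ x
  | app M N, σ => app (M.substF σ) (N.substF σ)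
  | lam x M, σ =>
      let y := freshVar ((M.fv.erase x).biUnion fun z => (σ z).fv)
      lam y (M.substF (Function.update σ x (var y)))

/-- Capture-avoiding substitution `M[N/x]`. -/
def subst (M : Lam) (x : ℕ) (N : Lam) : Lam :=
  M.substF fun z => if z = x then N else var z

/-- Being an abstraction. -/
def isAbs : Lam → Prop
  | lam _ _ => True
  | _ => False

end Lam

/-- One-step β-reduction. -/
inductive Beta : Lam → Lam → Prop
  | beta (x : ℕ) (M N : Lam) : Beta (.app (.lam x M) N) (M.subst x N)
  | appL {M M' : Lam} (N : Lam) : Beta M M' → Beta (.app M N) (.app M' N)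
  | appR {N N' : Lam} (M : Lam) : Beta N N' → Beta (.app M N) (.app M N')
  | lam (x : ℕ) {M M' : Lam} : Beta M M' → Beta (.lam x M) (.lam x M')

/-- One-step head reduction. -/
inductive Head : Lam → Lam → Prop
  | beta (x : ℕ) (M N : Lam) : Head (.app (.lam x M) N) (M.subst x N)
  | app {M M' : Lam} (N : Lam) : ¬ M.isAbs → Head M M' → Head (.app M N) (.app M' N)
  | lam (x : ℕ) {M M' : Lam} : Head M M' → Head (.lam x M) (.lam x M')

/-- Iterated head reduction. -/
def HeadStar : Lam → Lam → Prop := Relation.ReflTransGen Head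

/-- Terms of the shape `y M₁ ⋯ Mₖ`. -/
inductive Neutral : Lam → Prop
  | var (x : ℕ) : Neutral (.var x)
  | app {M : Lam} (N : Lam) : Neutral M → Neutral (.app M N)

/-- Head normal forms `λx₁…xₙ.y M₁ ⋯ Mₖ`. -/
inductive Hnf : Lam → Prop
  | neutral {M : Lam} : Neutral M → Hnf M
  | lam (x : ℕ) {M : Lam} : Hnf M → Hnf (.lam x M)

/-- `M` has a head normal form. -/
def HasHnf (M : Lam) : Prop := ∃ H, HeadStar M H ∧ Hnf H

/-! # Multi-types -/

/-- Simple types: atoms `a ∈ ℕ`, arrows `[]_X → β` and `[α₀,…,αₙ] → β`. -/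
inductive STy : Type
  | atom : ℕ → STy
  | arr0 : Finset ℕ → STy → STy
  | arrP : STy → List STy → STy → STy

/-- Multiset types: the annotated empty multiset `[]_X` or a
non-empty multiset `[α₀,…,αₙ]` (head plus tail). -/
inductive MTy : Type
  | empty : Finset ℕ → MTy
  | mk : STy → List STy → MTy

/-- The arrow type `ᾱ → β`. -/
def MTy.arr : MTy → STy → STy
  | .empty X, β => .arr0 X β
  | .mk α l, β => .arrP α l β

/-- The underlying multiset of simple types of a multiset type. -/
def MTy.toM : MTy → Multiset STy
  | .empty _ => 0
  | .mk α l => α ::ₘ (l : Multiset STy)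

/-- Multi-types: `σ ::= e_X | α`. -/
inductive OTy : Type
  | esum : Finset ℕ → OTy
  | simple : STy → OTy

mutual
/-- Atoms occurring in a simple type. -/
def STy.atoms : STy → Finset ℕ
  | .atom a => {a}
  | .arr0 _ β => β.atoms
  | .arrP α l β => α.atoms ∪ STy.atomsL l ∪ β.atoms
def STy.atomsL : List STy → Finset ℕ
  | [] => ∅
  | α :: l => α.atoms ∪ STy.atomsL l
end

/-! # Environments -/

/-- Type environments: finitely supported maps from variables
to finite multisets of simple types; added pointwise. -/
abbrev TEnv := ℕ →₀ Multiset STy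

/-- Variable environments: finite partial maps from variables to finite
sets of variables. -/
abbrev VEnv := Finmap (fun _ : ℕ => Finset ℕ)

namespace VEnv

/-- `⋃Δ`: the union of the values of `Δ`. -/
def uni (Δ : VEnv) : Finset ℕ :=
  Δ.keys.biUnion fun x => (Δ.lookup x).getD ∅

/-- Coherence `Δ₀ ≍ Δ₁`: agreement on the common domain. -/
def Coh (Δ₀ Δ₁ : VEnv) : Prop :=
  ∀ x : ℕ, x ∈ Δ₀ → x ∈ Δ₁ → Δ₀.lookup x = Δ₁.lookup x

end VEnv

/-! # The multi-type system for the λI-calculus -/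

mutual
/-- Typing judgement `Γ; Δ ⊢ M : σ`. -/
inductive Der : TEnv → VEnv → Lam → OTy → Prop
  | esum {Δ : VEnv} {M : Lam} :
      Δ.keys = M.fv → Der 0 Δ M (.esum Δ.uni)
  | ax (x : ℕ) (α : STy) (X : Finset ℕ) :
      Der (Finsupp.single x {α}) (Finmap.singleton x X) (.var x) (.simple α)
  | app {Γ₀ Γ₁ : TEnv} {Δ₀ Δ₁ : VEnv} {M N : Lam} {m : MTy} {β : STy} :
      Der Γ₀ Δ₀ M (.simple (m.arr β)) → DerB Γ₁ Δ₁ N m → VEnv.Coh Δ₀ Δ₁ →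
      Der (Γ₀ + Γ₁) (Δ₀ ∪ Δ₁) (.app M N) (.simple β)
  | lam0 {Γ : TEnv} {Δ : VEnv} {x : ℕ} {X : Finset ℕ} {M : Lam} {β : STy} :
      Γ x = 0 → x ∉ Δ → Der Γ (Δ.insert x X) M (.simple β) →
      Der Γ Δ (.lam x M) (.simple (.arr0 X β))
  | lamP {Γ : TEnv} {Δ : VEnv} {x : ℕ} {X : Finset ℕ} {M : Lam} {α : STy}
      {l : List STy} {β : STy} :
      Γ x = 0 → x ∉ Δ →
      Der (Γ + Finsupp.single x (MTy.mk α l).toM) (Δ.insert x X) M (.simple β) →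
      Der Γ Δ (.lam x M) (.simple (.arrP α l β))

/-- Typing judgement `Γ; Δ ⊢! M : ᾱ`. -/
inductive DerB : TEnv → VEnv → Lam → MTy → Prop
  | bang0 {Δ : VEnv} {M : Lam} :
      Δ.keys = M.fv → DerB 0 Δ M (.empty Δ.uni)
  | one {Γ : TEnv} {Δ : VEnv} {M : Lam} {α : STy} :
      Der Γ Δ M (.simple α) → DerB Γ Δ M (.mk α [])
  | cons {Γ₀ Γ₁ : TEnv} {Δ : VEnv} {M : Lam} {α α' : STy} {l : List STy} :
      Der Γ₀ Δ M (.simple α) → DerB Γ₁ Δ M (.mk α' l) →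
      DerB (Γ₀ + Γ₁) Δ M (.mk α (α' :: l))
end

/-- The multi-type interpretation `⟦M⟧`. -/
def interp (M : Lam) : Set (TEnv × VEnv × OTy) :=
  { p | Der p.1 p.2.1 M p.2.2 }

/-! # Ohana trees (coinductive equality, as a greatest fixpoint) -/

/-- Matching of the spines `y M₁ ⋯ Mₖ` of two head normal forms:
same head variable, same number of arguments, arguments related by `R`. -/
inductive SpineMatch (R : Lam → Lam → Prop) : Lam → Lam → Prop
  | var (y : ℕ) : SpineMatch R (.var y) (.var y)
  | app {P Q M N : Lam} : SpineMatch R P Q → R M N →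
      SpineMatch R (.app P M) (.app Q N)

/-- Matching of two head normal forms, comparing abstraction prefixes
up to renaming of the bound variables. -/
inductive HnfMatch (R : Lam → Lam → Prop) : Lam → Lam → Prop
  | base {P Q : Lam} : SpineMatch R P Q → HnfMatch R P Q
  | lam {x y : ℕ} {P Q : Lam} :
      (∀ z : ℕ, z ∉ (P.fv.erase x ∪ Q.fv.erase y) →
        HnfMatch R (P.subst x (.var z)) (Q.subst y (.var z))) →
      HnfMatch R (.lam x P) (.lam y Q)

/-- `R` is an Ohana-tree bisimulation. -/
def OTBisim (R : Lam → Lam → Prop) : Prop :=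
  ∀ M N, R M N →
    (¬ HasHnf M ∧ ¬ HasHnf N ∧ M.fv = N.fv) ∨
    (∃ P Q, HeadStar M P ∧ HeadStar N Q ∧ Hnf P ∧ Hnf Q ∧ HnfMatch R P Q)

/-- Equality of Ohana trees: `OT(M) = OT(N)`. -/
def OTEq (M N : Lam) : Prop := ∃ R, OTBisim R ∧ R M N

/-! # λI-resource terms -/

mutual
inductive RTm : Type
  | var : ℕ → RTm
  | lam : ℕ → RTm → RTm
  | app : RTm → RBag → RTm
inductive RBag : Type
  | empty : Finset ℕ → RBag
  | mk : RTm → List RTm → RBag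
end

noncomputable instance : DecidableEq RTm := fun _ _ => Classical.dec _
noncomputable instance : DecidableEq RBag := fun _ _ => Classical.dec _

mutual
/-- Free variables of a resource term. -/
def RTm.fv : RTm → Finset ℕ
  | .var x => {x}
  | .lam x s => s.fv.erase x
  | .app s b => s.fv ∪ b.fv
/-- Free variables of a bag. -/
def RBag.fv : RBag → Finset ℕ
  | .empty X => X
  | .mk h t => h.fv ∪ RTm.fvL t
/-- Free variables of a list of resource terms. -/
def RTm.fvL : List RTm → Finset ℕ
  | [] => ∅
  | h :: t => h.fv ∪ RTm.fvL t
end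

mutual
/-- λI-resource terms: in every abstraction `λx.s`, `x` occurs free in `s`. -/
inductive RTm.IsIr : RTm → Prop
  | var (x : ℕ) : RTm.IsIr (.var x)
  | lam {x : ℕ} {s : RTm} : x ∈ s.fv → RTm.IsIr s → RTm.IsIr (.lam x s)
  | app {s : RTm} {b : RBag} : RTm.IsIr s → RBag.IsIr b → RTm.IsIr (.app s b)
inductive RBag.IsIr : RBag → Prop
  | empty (X : Finset ℕ) : RBag.IsIr (.empty X)
  | mk {h : RTm} {t : List RTm} : RTm.IsIr h → (∀ u ∈ t, RTm.IsIr u) →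
      RBag.IsIr (.mk h t)
end

/-- The list of elements of a bag. -/
def RBag.toList : RBag → List RTm
  | .empty _ => []
  | .mk h t => h :: t

/-! Linear (bijective) substitution: `LSub s x ts t` means that `t` is obtained
by substituting the elements of the list `ts` for the free occurrences of `x`
in `s`, in left-to-right order (annotations of empty bags absorb). -/
mutual
inductive LSub : RTm → ℕ → List RTm → RTm → Prop
  | var_hit (x : ℕ) (t : RTm) : LSub (.var x) x [t] t
  | var_miss {x y : ℕ} : y ≠ x → LSub (.var y) x [] (.var y)
  | lam {x y : ℕ} {s : RTm} {ts : List RTm} {s' : RTm} :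
      y ≠ x → y ∉ RTm.fvL ts → LSub s x ts s' →
      LSub (.lam y s) x ts (.lam y s')
  | app {s : RTm} {b : RBag} {x : ℕ} {ts₁ ts₂ : List RTm} {s' : RTm} {b' : RBag} :
      LSub s x ts₁ s' → LSubB b x ts₂ b' →
      LSub (.app s b) x (ts₁ ++ ts₂) (.app s' b')
inductive LSubB : RBag → ℕ → List RTm → RBag → Prop
  | empty_hit {X : Finset ℕ} {x : ℕ} {ts : List RTm} :
      x ∈ X → LSubB (.empty X) x ts (.empty ((X.erase x) ∪ RTm.fvL ts))
  | empty_miss {X : Finset ℕ} {x : ℕ} :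
      x ∉ X → LSubB (.empty X) x [] (.empty X)
  | mk {h : RTm} {t : List RTm} {x : ℕ} {ts₁ ts₂ : List RTm} {h' : RTm}
      {t' : List RTm} :
      LSub h x ts₁ h' → LSubL t x ts₂ t' →
      LSubB (.mk h t) x (ts₁ ++ ts₂) (.mk h' t')
inductive LSubL : List RTm → ℕ → List RTm → List RTm → Prop
  | nil (x : ℕ) : LSubL [] x [] []
  | cons {h : RTm} {t : List RTm} {x : ℕ} {ts₁ ts₂ : List RTm} {h' : RTm}
      {t' : List RTm} :
      LSub h x ts₁ h' → LSubL t x ts₂ t' →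
      LSubL (h :: t) x (ts₁ ++ ts₂) (h' :: t')
end

/-- The root resource reduction step `(λx.s)b →r T`:
`T` is the sum of all results of bijective substitution of the elements
of `b` for the free occurrences of `x` in `s`. -/
def RootRed (x : ℕ) (s : RTm) (b : RBag) (T : Finset RTm) : Prop :=
  ∀ u : RTm, u ∈ T ↔ ∃ l : List RTm, l.Perm b.toList ∧ LSub s x l u

/-- Pushing an element on top of a bag. -/
def RBag.push (h : RTm) : RBag → RBag
  | .empty _ => .mk h []
  | .mk h' t => .mk h (h' :: t)

mutual
/-- One-step resource reduction of a term to a finite sum. -/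
inductive RStep : RTm → Finset RTm → Prop
  | root {x : ℕ} {s : RTm} {b : RBag} {T : Finset RTm} :
      RootRed x s b T → RStep (.app (.lam x s) b) T
  | appL {s : RTm} {T : Finset RTm} {b : RBag} :
      RStep s T → RStep (.app s b) (T.image fun s' => .app s' b)
  | appB {s : RTm} {b : RBag} {Tb : Finset RBag} :
      RStepB b Tb → RStep (.app s b) (Tb.image fun b' => .app s b')
  | lam {x : ℕ} {s : RTm} {T : Finset RTm} :
      RStep s T → RStep (.lam x s) (T.image fun s' => .lam x s')
/-- One-step resource reduction inside a bag. -/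
inductive RStepB : RBag → Finset RBag → Prop
  | head {h : RTm} {t : List RTm} {T : Finset RTm} :
      RStep h T → RStepB (.mk h t) (T.image fun h' => .mk h' t)
  | tail {h h₂ : RTm} {t : List RTm} {B : Finset RBag} :
      RStepB (.mk h₂ t) B → RStepB (.mk h (h₂ :: t)) (B.image (RBag.push h))
end

/-- One-step resource reduction on finite sums (linear extension). -/
inductive RRed : Finset RTm → Finset RTm → Prop
  | step {S : Finset RTm} {s : RTm} {T : Finset RTm} :
      s ∈ S → RStep s T → RRed S ((S.erase s) ∪ T)

/-- `→r*`. -/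
def RRedStar : Finset RTm → Finset RTm → Prop := Relation.ReflTransGen RRed

/-! # The resource multi-type system -/

mutual
/-- Resource typing judgement `Γ; Δ ⊢ s : α`. -/
inductive DerR : TEnv → VEnv → RTm → STy → Prop
  | ax (x : ℕ) (α : STy) (X : Finset ℕ) :
      DerR (Finsupp.single x {α}) (Finmap.singleton x X) (.var x) α
  | app {Γ₀ Γ₁ : TEnv} {Δ₀ Δ₁ : VEnv} {s : RTm} {b : RBag} {m : MTy} {β : STy} :
      DerR Γ₀ Δ₀ s (m.arr β) → DerRB Γ₁ Δ₁ b m → VEnv.Coh Δ₀ Δ₁ →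
      DerR (Γ₀ + Γ₁) (Δ₀ ∪ Δ₁) (.app s b) β
  | lam0 {Γ : TEnv} {Δ : VEnv} {x : ℕ} {X : Finset ℕ} {s : RTm} {β : STy} :
      Γ x = 0 → x ∉ Δ → DerR Γ (Δ.insert x X) s β →
      DerR Γ Δ (.lam x s) (.arr0 X β)
  | lamP {Γ : TEnv} {Δ : VEnv} {x : ℕ} {X : Finset ℕ} {s : RTm} {α : STy}
      {l : List STy} {β : STy} :
      Γ x = 0 → x ∉ Δ →
      DerR (Γ + Finsupp.single x (MTy.mk α l).toM) (Δ.insert x X) s β →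
      DerR Γ Δ (.lam x s) (.arrP α l β)
/-- Resource typing judgement `Γ; Δ ⊢! t̄ : ᾱ`. -/
inductive DerRB : TEnv → VEnv → RBag → MTy → Prop
  | bang0 {Δ : VEnv} : DerRB 0 Δ (.empty Δ.keys) (.empty Δ.uni)
  | one {Γ : TEnv} {Δ : VEnv} {t : RTm} {α : STy} :
      DerR Γ Δ t α → DerRB Γ Δ (.mk t []) (.mk α [])
  | cons {Γ₀ Γ₁ : TEnv} {Δ : VEnv} {t t' : RTm} {l : List RTm} {α α' : STy}
      {la : List STy} :
      DerR Γ₀ Δ t α → DerRB Γ₁ Δ (.mk t' l) (.mk α' la) →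
      DerRB (Γ₀ + Γ₁) Δ (.mk t (t' :: l)) (.mk α (α' :: la))
end

/-! # Taylor expansion -/

/-- `Taylor M s`: the resource term `s` belongs to the Taylor expansion `T(M)`. -/
inductive Taylor : Lam → RTm → Prop
  | var (x : ℕ) : Taylor (.var x) (.var x)
  | lam {M : Lam} {s : RTm} (x : ℕ) : Taylor M s → Taylor (.lam x M) (.lam x s)
  | app0 {M N : Lam} {s : RTm} : Taylor M s →
      Taylor (.app M N) (.app s (.empty N.fv))
  | appP {M N : Lam} {s t : RTm} {l : List RTm} :
      Taylor M s → Taylor N t → (∀ u ∈ l, Taylor N u) →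
      Taylor (.app M N) (.app s (.mk t l))

/-! # Miscellaneous constructions for the last statement -/

/-- The variable environment `Δ_id` mapping each `x ∈ s` to `{x}`. -/
def idEnv (s : Finset ℕ) : VEnv :=
  (s.sort (· ≤ ·)).foldr (fun x Δ => Δ.insert x ({x} : Finset ℕ)) ∅

/-- The term `y M₁ ⋯ Mₖ`. -/
def Lam.spineApp (y : ℕ) (l : List Lam) : Lam := l.foldl .app (.var y)

/-- The type `[]_{fv N₁} → ⋯ → []_{fv Nₖ} → a`. -/
def yTyRest (a : ℕ) : List Lam → STy
  | [] => .atom a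
  | N :: l => .arr0 N.fv (yTyRest a l)

/-- The type `[]_{fv M₁} → ⋯ → [α] → ⋯ → []_{fv Mₖ} → a`, with `[α]`
in the `i`-th argument position (0-based). -/
def yTy (α : STy) (a : ℕ) : List Lam → ℕ → STy
  | [], _ => .atom a
  | _ :: l, 0 => .arrP α [] (yTyRest a l)
  | N :: l, (i+1) => .arr0 N.fv (yTy α a l i)

/-!
The annotations carried by `Δ` are made functional: a derivation of `Γ; Δ ⊢ M : σ` forces
`dom Δ = fv M`, so `Δ` is the restriction to `fv M` of a total map `E` from variables to sets of
variables, and coherence of two environments says that they are restrictions of a common `E`.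
In this form the typing rules invert to equivalences whose only side conditions concern `Γ`.

The lemma is then an instance of one for simultaneous substitutions `σ`. If every hypothesis
`z : α` of `Γ` is replaced by a derivation of `σ z : α`, and the annotation of each `z` is the
union of the annotations of `fv (σ z)`, a derivation for `M` becomes one for `M[σ]`, typed in the
sum of the environments used. The induction on `M` goes through because such a family of
derivations splits along `Γ₀ + Γ₁` and extends under a binder. An empty multiset type `[]_X` has
no hypotheses to replace, and its annotation `X` is preserved since
`fv (M[σ]) = ⋃ {fv (σ z) | z ∈ fv M}`.
-/

/-! ## Sums of related families -/

section RelSum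

variable {ι κ A B : Type*} [AddCommMonoid A] [AddCommMonoid B]

/-- `RelSum P m a`: the element `a` is a sum of elements related by `P` to the members of the
multiset `m`, one for each. It expresses the rule `(!⁺)`, where `m` is a multiset of types and `a`
the total type environment. -/
def RelSum (P : ι → A → Prop) (m : Multiset ι) (a : A) : Prop :=
  ∃ s : Multiset A, Multiset.Rel P m s ∧ s.sum = a

namespace RelSum

variable {P Q : ι → A → Prop} {m m₀ m₁ : Multiset ι} {a a₀ a₁ : A}

theorem zero_left_iff : RelSum P 0 a ↔ a = 0 := by
  simp [RelSum, Multiset.rel_zero_left, eq_comm]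

theorem singleton_left_iff {i : ι} : RelSum P {i} a ↔ P i a := by
  constructor
  · rintro ⟨s, hs, rfl⟩
    obtain ⟨a, t, hi, ht, rfl⟩ := Multiset.rel_cons_left.1 hs
    rw [Multiset.rel_zero_left.1 ht, Multiset.sum_cons, Multiset.sum_zero, add_zero]
    exact hi
  · intro hi
    exact ⟨{a}, .cons hi .zero, Multiset.sum_singleton a⟩

theorem add (h₀ : RelSum P m₀ a₀) (h₁ : RelSum P m₁ a₁) : RelSum P (m₀ + m₁) (a₀ + a₁) := by
  obtain ⟨s₀, hs₀, rfl⟩ := h₀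
  obtain ⟨s₁, hs₁, rfl⟩ := h₁
  exact ⟨s₀ + s₁, hs₀.add hs₁, Multiset.sum_add s₀ s₁⟩

theorem add_left_iff :
    RelSum P (m₀ + m₁) a ↔ ∃ a₀ a₁, RelSum P m₀ a₀ ∧ RelSum P m₁ a₁ ∧ a = a₀ + a₁ := by
  constructor
  · rintro ⟨s, hs, rfl⟩
    obtain ⟨s₀, s₁, hs₀, hs₁, rfl⟩ := Multiset.rel_add_left.1 hs
    exact ⟨_, _, ⟨s₀, hs₀, rfl⟩, ⟨s₁, hs₁, rfl⟩, Multiset.sum_add s₀ s₁⟩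
  · rintro ⟨a₀, a₁, h₀, h₁, rfl⟩
    exact h₀.add h₁

theorem cons_left_iff {i : ι} :
    RelSum P (i ::ₘ m) a ↔ ∃ a₀ a₁, P i a₀ ∧ RelSum P m a₁ ∧ a = a₀ + a₁ := by
  simp only [← Multiset.singleton_add, add_left_iff, singleton_left_iff]

theorem map_left_iff {P : κ → A → Prop} {f : ι → κ} :
    RelSum P (m.map f) a ↔ RelSum (fun i => P (f i)) m a := by
  simp only [RelSum, Multiset.rel_map_left]

theorem mono (h : RelSum P m a) (hPQ : ∀ i ∈ m, ∀ b, P i b → Q i b) : RelSum Q m a := by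
  obtain ⟨s, hs, rfl⟩ := h
  exact ⟨s, hs.mono fun i hi b _ => hPQ i hi b, rfl⟩

theorem map_eq_zero (h : RelSum P m a) (f : A →+ B) (hf : ∀ i ∈ m, ∀ b, P i b → f b = 0) :
    f a = 0 := by
  induction m using Multiset.induction_on generalizing a with
  | empty => rw [zero_left_iff.1 h, map_zero]
  | cons i m ih =>
    obtain ⟨b, c, hb, hc, rfl⟩ := cons_left_iff.1 h
    rw [map_add, hf i (Multiset.mem_cons_self i m) b hb,
      ih hc fun j hj => hf j (Multiset.mem_cons_of_mem hj), add_zero]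

theorem trans {P : ι → A → Prop} {Q : κ → B → Prop} {R : ι → B → Prop} {b : B}
    (f : A →+ Multiset κ) (h : RelSum P m a) (hQ : RelSum Q (f a) b)
    (hR : ∀ i ∈ m, ∀ a b, P i a → RelSum Q (f a) b → R i b) : RelSum R m b := by
  induction m using Multiset.induction_on generalizing a b with
  | empty =>
    rw [zero_left_iff.1 h, map_zero, zero_left_iff] at hQ
    exact zero_left_iff.2 hQ
  | cons i m ih =>
    obtain ⟨a₀, a₁, h₀, h₁, rfl⟩ := cons_left_iff.1 h
    rw [map_add] at hQ
    obtain ⟨b₀, b₁, hQ₀, hQ₁, rfl⟩ := add_left_iff.1 hQ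
    exact cons_left_iff.2 ⟨b₀, b₁, hR i (Multiset.mem_cons_self i m) a₀ b₀ h₀ hQ₀,
      ih h₁ hQ₁ fun j hj => hR j (Multiset.mem_cons_of_mem hj), rfl⟩

end RelSum

end RelSum

/-! ## Free variables of substitutions -/

theorem biUnion_update_of_notMem {ι κ : Type*} [DecidableEq ι] [DecidableEq κ] {S : Finset ι}
    {x : ι} (hx : x ∉ S) (E : ι → Finset κ) (X : Finset κ) :
    S.biUnion (Function.update E x X) = S.biUnion E := by
  refine Finset.biUnion_congr rfl fun z hz => ?_
  rw [Function.update_of_ne (ne_of_mem_of_not_mem hz hx)]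

namespace Lam

theorem freshVar_notMem (s : Finset ℕ) : freshVar s ∉ s := fun h =>
  (Finset.le_sup (f := id) h).not_gt (Nat.lt_succ_self _)

theorem fv_substF (M : Lam) (σ : ℕ → Lam) :
    (M.substF σ).fv = M.fv.biUnion fun z => (σ z).fv := by
  induction M generalizing σ with
  | var x => simp [substF, fv]
  | app M N ihM ihN => simp only [substF, fv, ihM, ihN, Finset.union_biUnion]
  | lam x M ih =>
    have hy := freshVar_notMem ((M.fv.erase x).biUnion fun z => (σ z).fv)
    simp only [substF, fv, ih]
    grind [fv]

theorem mem_fv_substF_update_var {M : Lam} {σ : ℕ → Lam} {x y : ℕ} (hx : x ∈ M.fv) :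
    y ∈ (M.substF (Function.update σ x (var y))).fv := by
  rw [fv_substF]
  exact Finset.mem_biUnion.2 ⟨x, hx, by simp [fv]⟩

theorem biUnion_fv_substF {M : Lam} {σ : ℕ → Lam} {E E' : ℕ → Finset ℕ}
    (hE : ∀ z ∈ M.fv, (σ z).fv.biUnion E' = E z) :
    (M.substF σ).fv.biUnion E' = M.fv.biUnion E := by
  rw [fv_substF, Finset.biUnion_biUnion, Finset.biUnion_congr rfl hE]

theorem biUnion_fv_update {σ : ℕ → Lam} {E E' : ℕ → Finset ℕ} {x : ℕ} {N : Lam}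
    {X S : Finset ℕ} (hσ : ∀ z ∈ S.erase x, (σ z).fv.biUnion E' = E z)
    (hN : N.fv.biUnion E' = X) :
    ∀ z ∈ S, (Function.update σ x N z).fv.biUnion E' = Function.update E x X z := by
  intro z hz
  obtain rfl | hzx := eq_or_ne z x
  · simp [hN]
  · simp [hzx, hσ z (Finset.mem_erase.2 ⟨hzx, hz⟩)]

theorem subst_eq_substF_update (M : Lam) (x : ℕ) (N : Lam) :
    M.subst x N = M.substF (Function.update var x N) := by
  rw [subst]
  congr 1
  ext1 z
  simp only [Function.update_apply]

theorem fv_subst {M : Lam} {x : ℕ} (hx : x ∈ M.fv) (N : Lam) :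
    (M.subst x N).fv = M.fv.erase x ∪ N.fv := by
  rw [subst, fv_substF]
  grind [fv]

end Lam

/-! ## Variable environments as restrictions of total maps -/

namespace VEnv

/-- The variable environment with domain `S` whose values are given by `E`. It replaces the
partial map `Δ` by a total one, so that coherent environments can share the same `E`. -/
def restrict (E : ℕ → Finset ℕ) (S : Finset ℕ) : VEnv :=
  Finmap.keysLookupEquiv.symm ⟨(S, fun z => if z ∈ S then some (E z) else none), by simp⟩

variable {E : ℕ → Finset ℕ} {S : Finset ℕ} {Δ Δ₀ Δ₁ : VEnv}

theorem keys_restrict (E : ℕ → Finset ℕ) (S : Finset ℕ) : (restrict E S).keys = S := by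
  simp [restrict]

theorem lookup_restrict (E : ℕ → Finset ℕ) (S : Finset ℕ) (z : ℕ) :
    (restrict E S).lookup z = if z ∈ S then some (E z) else none := by
  simp [restrict]

theorem mem_restrict {z : ℕ} : z ∈ restrict E S ↔ z ∈ S := by
  rw [← Finmap.mem_keys, keys_restrict]

theorem uni_restrict (E : ℕ → Finset ℕ) (S : Finset ℕ) : (restrict E S).uni = S.biUnion E := by
  rw [uni, keys_restrict]
  exact Finset.biUnion_congr rfl fun z hz => by simp [lookup_restrict, hz]

theorem restrict_update_of_notMem {x : ℕ} (hx : x ∉ S) (X : Finset ℕ) :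
    restrict (Function.update E x X) S = restrict E S := by
  refine Finmap.ext_lookup fun z => ?_
  grind [lookup_restrict]

theorem restrict_singleton (E : ℕ → Finset ℕ) (x : ℕ) :
    restrict E {x} = Finmap.singleton x (E x) := by
  refine Finmap.ext_lookup fun z => ?_
  obtain rfl | hzx := eq_or_ne z x
  · simp [lookup_restrict]
  · simp [lookup_restrict, hzx, eq_comm (a := none), Finmap.lookup_eq_none]

theorem restrict_union (E : ℕ → Finset ℕ) (S T : Finset ℕ) :
    restrict E S ∪ restrict E T = restrict E (S ∪ T) := by
  refine Finmap.ext_lookup fun z => ?_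
  by_cases hz : z ∈ restrict E S
  · rw [Finmap.lookup_union_left hz]
    grind [lookup_restrict, mem_restrict]
  · rw [Finmap.lookup_union_right hz]
    grind [lookup_restrict, mem_restrict]

theorem insert_restrict (E : ℕ → Finset ℕ) (S : Finset ℕ) (x : ℕ) (X : Finset ℕ) :
    (restrict E S).insert x X = restrict (Function.update E x X) (insert x S) := by
  refine Finmap.ext_lookup fun z => ?_
  obtain rfl | hzx := eq_or_ne z x
  · simp [lookup_restrict]
  · simp [lookup_restrict, Finmap.lookup_insert_of_ne _ hzx, hzx]

theorem coh_restrict (E : ℕ → Finset ℕ) (S T : Finset ℕ) : Coh (restrict E S) (restrict E T) := by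
  intro z hS hT
  simp [lookup_restrict, mem_restrict.1 hS, mem_restrict.1 hT]

theorem mem_and_keys_eq_erase_of_keys_insert_eq {x : ℕ} {X : Finset ℕ} (hx : x ∉ Δ)
    (h : (Δ.insert x X).keys = S) : x ∈ S ∧ Δ.keys = S.erase x := by
  subst h
  grind [Finmap.mem_keys, Finmap.mem_insert]

theorem eq_restrict_of_forall_mem (h : ∀ z ∈ Δ, Δ.lookup z = some (E z)) :
    Δ = restrict E Δ.keys := by
  refine Finmap.ext_lookup fun z => ?_
  by_cases hz : z ∈ Δ
  · rw [lookup_restrict, if_pos (Finmap.mem_keys.2 hz), h z hz]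
  · rw [lookup_restrict, if_neg (mt Finmap.mem_keys.1 hz), Finmap.lookup_eq_none.2 hz]

theorem exists_eq_restrict_keys (Δ : VEnv) : ∃ E, Δ = restrict E Δ.keys := by
  refine ⟨fun z => (Δ.lookup z).getD ∅, eq_restrict_of_forall_mem fun z hz => ?_⟩
  obtain ⟨X, hX⟩ := Finmap.mem_iff.1 hz
  simp [hX]

theorem Coh.eq_restrict_of_union_eq (hc : Coh Δ₀ Δ₁) (h : Δ₀ ∪ Δ₁ = restrict E S) :
    Δ₀ = restrict E Δ₀.keys ∧ Δ₁ = restrict E Δ₁.keys := by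
  have hE : ∀ z ∈ Δ₀ ∪ Δ₁, (Δ₀ ∪ Δ₁).lookup z = some (E z) := by
    intro z hz
    rw [h] at hz ⊢
    rw [lookup_restrict, if_pos (mem_restrict.1 hz)]
  have h₀ : ∀ z ∈ Δ₀, Δ₀.lookup z = some (E z) := fun z hz => by
    rw [← hE z (Finmap.mem_union.2 (.inl hz)), Finmap.lookup_union_left hz]
  refine ⟨eq_restrict_of_forall_mem h₀, eq_restrict_of_forall_mem fun z hz => ?_⟩
  by_cases hz₀ : z ∈ Δ₀
  · rw [← hc z hz₀ hz, h₀ z hz₀]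
  · rw [← hE z (Finmap.mem_union.2 (.inr hz)), Finmap.lookup_union_right hz₀]

end VEnv

/-! ## Inversion of the typing rules -/

mutual

theorem Der.keys_eq_fv {Γ : TEnv} {Δ : VEnv} {M : Lam} {τ : OTy} : Der Γ Δ M τ → Δ.keys = M.fv
  | .esum h => h
  | .ax x _ X => Finmap.keys_singleton x X
  | .app hM hN _ => by rw [Finmap.keys_union, hM.keys_eq_fv, hN.keys_eq_fv, Lam.fv]
  | .lam0 _ hx h | .lamP _ hx h =>
    (VEnv.mem_and_keys_eq_erase_of_keys_insert_eq hx h.keys_eq_fv).2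

theorem DerB.keys_eq_fv {Γ : TEnv} {Δ : VEnv} {M : Lam} {m : MTy} :
    DerB Γ Δ M m → Δ.keys = M.fv
  | .bang0 h => h
  | .one h | .cons h _ => h.keys_eq_fv

end

mutual

theorem Der.support_subset_keys {Γ : TEnv} {Δ : VEnv} {M : Lam} {τ : OTy} :
    Der Γ Δ M τ → Γ.support ⊆ Δ.keys
  | .esum _ => by simp
  | .ax x α X => by simp
  | .app hM hN _ => by
    rw [Finmap.keys_union]
    exact Finsupp.support_add.trans
      (Finset.union_subset_union hM.support_subset_keys hN.support_subset_keys)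
  | .lam0 hΓ _ h => fun z hz => by
    have hzΔ := h.support_subset_keys hz
    grind [Finmap.mem_keys, Finmap.mem_insert]
  | .lamP (Γ := Γ) (x := x) (α := α) (l := l) hΓ _ h => fun z hz => by
    have hzx : z ≠ x := by
      rintro rfl
      exact Finsupp.mem_support_iff.1 hz hΓ
    have hzM : z ∈ (Γ + Finsupp.single x (MTy.mk α l).toM).support := by simpa [hzx] using hz
    have hzΔ := h.support_subset_keys hzM
    grind [Finmap.mem_keys, Finmap.mem_insert]

theorem DerB.support_subset_keys {Γ : TEnv} {Δ : VEnv} {M : Lam} {m : MTy} :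
    DerB Γ Δ M m → Γ.support ⊆ Δ.keys
  | .bang0 _ => by simp
  | .one h => h.support_subset_keys
  | .cons h hl => Finsupp.support_add.trans
      (Finset.union_subset h.support_subset_keys hl.support_subset_keys)

end

/-- The annotation of a multiset type, if it has one, is `X`. This condition, void for
`[α₀,…,αₙ]`, lets the rules for `[]_X` and for non-empty multiset types be stated as one. -/
def MTy.IsAnnotatedBy : MTy → Finset ℕ → Prop
  | .empty Y, X => Y = X
  | .mk _ _, _ => True

theorem derB_iff {Γ : TEnv} {Δ : VEnv} {N : Lam} {m : MTy} (hΔ : Δ.keys = N.fv) :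
    DerB Γ Δ N m ↔
      m.IsAnnotatedBy Δ.uni ∧ RelSum (fun α G => Der G Δ N (.simple α)) m.toM Γ := by
  cases m with
  | empty X =>
    simp only [MTy.IsAnnotatedBy, MTy.toM, RelSum.zero_left_iff]
    constructor
    · rintro ⟨_⟩
      exact ⟨rfl, rfl⟩
    · rintro ⟨rfl, rfl⟩
      exact .bang0 hΔ
  | mk α l =>
    simp only [MTy.IsAnnotatedBy, MTy.toM, true_and]
    induction l generalizing α Γ with
    | nil =>
      simp only [Multiset.coe_nil, Multiset.cons_zero, RelSum.singleton_left_iff]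
      exact ⟨fun | .one h => h, .one⟩
    | cons α' l ih =>
      rw [← Multiset.cons_coe, RelSum.cons_left_iff]
      constructor
      · rintro (_ | _ | ⟨h, hl⟩)
        exact ⟨_, _, h, (ih α').1 hl, rfl⟩
      · rintro ⟨Γ₀, Γ₁, h, hl, rfl⟩
        exact .cons h ((ih α').2 hl)

/-- The judgement `Γ; Δ ⊢ M : τ` where `Δ` is given by a total map `E`. The type environment
comes last so that `DerIn E M` can be summed by `RelSum`. -/
abbrev DerIn (E : ℕ → Finset ℕ) (M : Lam) (τ : OTy) (Γ : TEnv) : Prop :=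
  Der Γ (VEnv.restrict E M.fv) M τ

namespace DerIn

variable {E : ℕ → Finset ℕ} {Γ : TEnv} {M N : Lam} {τ : OTy} {β : STy} {x : ℕ}

theorem support_subset_fv (h : DerIn E M τ Γ) : Γ.support ⊆ M.fv :=
  h.support_subset_keys.trans (VEnv.keys_restrict E M.fv).subset

theorem apply_eq_zero (h : DerIn E M τ Γ) (hx : x ∉ M.fv) : Γ x = 0 :=
  Finsupp.notMem_support_iff.1 (mt (fun hxΓ => h.support_subset_fv hxΓ) hx)

theorem update_of_notMem (h : DerIn E M τ Γ) (hx : x ∉ M.fv) (X : Finset ℕ) :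
    DerIn (Function.update E x X) M τ Γ := by
  rwa [DerIn, VEnv.restrict_update_of_notMem hx]

theorem esum_iff {X : Finset ℕ} : DerIn E M (.esum X) Γ ↔ Γ = 0 ∧ X = M.fv.biUnion E := by
  rw [← VEnv.uni_restrict]
  constructor
  · intro h
    rw [DerIn] at h
    generalize VEnv.restrict E M.fv = Δ at h ⊢
    cases h
    exact ⟨rfl, rfl⟩
  · rintro ⟨rfl, rfl⟩
    exact .esum (VEnv.keys_restrict E M.fv)

theorem var_iff : DerIn E (.var x) (.simple β) Γ ↔ Γ = Finsupp.single x {β} := by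
  constructor
  · intro h
    rw [DerIn] at h
    generalize VEnv.restrict E (Lam.var x).fv = Δ at h
    cases h
    rfl
  · rintro rfl
    rw [DerIn, Lam.fv, VEnv.restrict_singleton]
    exact .ax x β (E x)

theorem relSum_var (E : ℕ → Finset ℕ) (x : ℕ) (m : Multiset STy) :
    RelSum (fun α => DerIn E (.var x) (.simple α)) m (Finsupp.single x m) := by
  induction m using Multiset.induction_on with
  | empty => rw [Finsupp.single_zero, RelSum.zero_left_iff]
  | cons α m ih =>
    refine RelSum.cons_left_iff.2 ⟨_, _, var_iff.2 rfl, ih, ?_⟩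
    rw [← Finsupp.single_add, Multiset.singleton_add]

theorem app_iff : DerIn E (.app M N) (.simple β) Γ ↔
    ∃ Γ₀ Γ₁ m, DerIn E M (.simple (MTy.arr m β)) Γ₀ ∧ m.IsAnnotatedBy (N.fv.biUnion E) ∧
      RelSum (fun α => DerIn E N (.simple α)) m.toM Γ₁ ∧ Γ = Γ₀ + Γ₁ := by
  have hB {Γ₁ : TEnv} {m : MTy} := derB_iff (Γ := Γ₁) (m := m) (VEnv.keys_restrict E N.fv)
  simp only [VEnv.uni_restrict] at hB
  constructor
  · intro h
    rw [DerIn] at h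
    generalize hΔ : VEnv.restrict E (Lam.app M N).fv = Δ at h
    cases h with
    | app hM hN hc =>
      obtain ⟨h₀, h₁⟩ := hc.eq_restrict_of_union_eq hΔ.symm
      rw [hM.keys_eq_fv] at h₀
      rw [hN.keys_eq_fv] at h₁
      subst h₀ h₁
      obtain ⟨hm, hN⟩ := hB.1 hN
      exact ⟨_, _, _, hM, hm, hN, rfl⟩
  · rintro ⟨Γ₀, Γ₁, m, hM, hm, hN, rfl⟩
    rw [DerIn, Lam.fv, ← VEnv.restrict_union]
    exact .app hM (hB.2 ⟨hm, hN⟩) (VEnv.coh_restrict E M.fv N.fv)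

theorem lam_iff : DerIn E (.lam x M) (.simple β) Γ ↔
    x ∈ M.fv ∧ Γ x = 0 ∧ ∃ X m β', β = MTy.arr m β' ∧ m.IsAnnotatedBy X ∧
      DerIn (Function.update E x X) M (.simple β') (Γ + Finsupp.single x m.toM) := by
  have hxΔ : x ∉ VEnv.restrict E (Lam.lam x M).fv := by simp [VEnv.mem_restrict, Lam.fv]
  have hins (hx : x ∈ M.fv) (X : Finset ℕ) : (VEnv.restrict E (Lam.lam x M).fv).insert x X =
      VEnv.restrict (Function.update E x X) M.fv := by
    rw [VEnv.insert_restrict, Lam.fv, Finset.insert_erase hx]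
  have hmem {X : Finset ℕ} {Γ' : TEnv} {β' : STy}
      (h : Der Γ' ((VEnv.restrict E (Lam.lam x M).fv).insert x X) M (.simple β')) : x ∈ M.fv :=
    (VEnv.mem_and_keys_eq_erase_of_keys_insert_eq hxΔ h.keys_eq_fv).1
  constructor
  · intro h
    rw [DerIn] at h
    generalize hΔ : VEnv.restrict E (Lam.lam x M).fv = Δ at h
    cases h with
    | @lam0 _ _ _ X _ β' hΓ _ h =>
      subst hΔ
      have hx := hmem h
      refine ⟨hx, hΓ, X, .empty X, β', rfl, rfl, ?_⟩
      rwa [DerIn, MTy.toM, Finsupp.single_zero, add_zero, ← hins hx]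
    | @lamP _ _ _ X _ α l β' hΓ _ h =>
      subst hΔ
      have hx := hmem h
      refine ⟨hx, hΓ, X, .mk α l, β', rfl, trivial, ?_⟩
      rwa [DerIn, ← hins hx]
  · rintro ⟨hx, hΓ, X, m, β', rfl, hm, h⟩
    rw [DerIn, ← hins hx] at h
    cases m with
    | empty Y =>
      obtain rfl : Y = X := hm
      rw [MTy.toM, Finsupp.single_zero, add_zero] at h
      exact .lam0 hΓ hxΔ h
    | mk α l => exact .lamP hΓ hxΔ h

end DerIn

/-! ## Typed substitutions -/

/-- The hypotheses `z : α` of a type environment, with multiplicity. -/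
noncomputable def TEnv.hyps : TEnv →+ Multiset (ℕ × STy) :=
  Finsupp.liftAddHom fun z => Multiset.mapAddMonoidHom (Prod.mk z)

theorem TEnv.hyps_single (x : ℕ) (m : Multiset STy) :
    TEnv.hyps (Finsupp.single x m) = m.map (Prod.mk x) :=
  Finsupp.liftAddHom_apply_single _ x m

theorem TEnv.mem_support_of_mem_hyps {Γ : TEnv} {p : ℕ × STy} (hp : p ∈ TEnv.hyps Γ) :
    p.1 ∈ Γ.support := by
  rw [hyps, Finsupp.liftAddHom_apply, Finsupp.sum, Multiset.mem_sum] at hp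
  obtain ⟨z, hz, hp⟩ := hp
  obtain ⟨α, -, rfl⟩ := Multiset.mem_map.1 hp
  exact hz

/-- `DerSubst E σ Γ H`: each hypothesis `z : α` of `Γ` comes with a derivation of `σ z : α`, and
`H` is the sum of the type environments of these derivations. -/
def DerSubst (E : ℕ → Finset ℕ) (σ : ℕ → Lam) (Γ H : TEnv) : Prop :=
  RelSum (fun p => DerIn E (σ p.1) (.simple p.2)) (TEnv.hyps Γ) H

namespace DerSubst

variable {E : ℕ → Finset ℕ} {σ : ℕ → Lam} {Γ Γ₀ Γ₁ H K : TEnv} {x y : ℕ} {N : Lam}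
  {m : Multiset STy}

theorem zero_iff : DerSubst E σ 0 H ↔ H = 0 := by
  rw [DerSubst, map_zero, RelSum.zero_left_iff]

theorem single_iff : DerSubst E σ (Finsupp.single x m) H ↔
    RelSum (fun α => DerIn E (σ x) (.simple α)) m H := by
  rw [DerSubst, TEnv.hyps_single, RelSum.map_left_iff]

theorem add_iff : DerSubst E σ (Γ₀ + Γ₁) H ↔
    ∃ H₀ H₁, DerSubst E σ Γ₀ H₀ ∧ DerSubst E σ Γ₁ H₁ ∧ H = H₀ + H₁ := by
  simp only [DerSubst, map_add, RelSum.add_left_iff]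

theorem var (E : ℕ → Finset ℕ) (Γ : TEnv) : DerSubst E Lam.var Γ Γ := by
  induction Γ using Finsupp.induction_linear with
  | zero => exact zero_iff.2 rfl
  | add Γ₀ Γ₁ h₀ h₁ => exact add_iff.2 ⟨Γ₀, Γ₁, h₀, h₁, rfl⟩
  | single x m => exact single_iff.2 (DerIn.relSum_var E x m)

theorem update (h : DerSubst E σ Γ H) (hx : Γ x = 0)
    (hN : RelSum (fun α => DerIn E N (.simple α)) m K) :
    DerSubst E (Function.update σ x N) (Γ + Finsupp.single x m) (H + K) := by
  refine add_iff.2 ⟨H, K, h.mono fun p hp G hG => ?_, ?_, rfl⟩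
  · have hpx : p.1 ≠ x := fun hpx =>
      Finsupp.mem_support_iff.1 (TEnv.mem_support_of_mem_hyps hp) (hpx ▸ hx)
    rwa [Function.update_of_ne hpx]
  · rwa [single_iff, Function.update_self]

theorem apply_eq_zero (h : DerSubst E σ Γ H) (hy : ∀ z ∈ Γ.support, y ∉ (σ z).fv) : H y = 0 :=
  RelSum.map_eq_zero h (Finsupp.applyAddHom y) fun p hp _ hG =>
    hG.apply_eq_zero (hy p.1 (TEnv.mem_support_of_mem_hyps hp))

theorem lift (h : DerSubst E σ Γ H) (hx : Γ x = 0) (hy : ∀ z ∈ Γ.support, y ∉ (σ z).fv)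
    (X : Finset ℕ) (m : Multiset STy) :
    DerSubst (Function.update E y X) (Function.update σ x (.var y))
      (Γ + Finsupp.single x m) (H + Finsupp.single y m) := by
  have hX : DerSubst (Function.update E y X) σ Γ H := h.mono fun p hp _ hG =>
    hG.update_of_notMem (hy p.1 (TEnv.mem_support_of_mem_hyps hp)) X
  exact hX.update hx (DerIn.relSum_var _ y m)

end DerSubst

/-! ## The substitution lemma -/

section Substitution

variable {E E' : ℕ → Finset ℕ} {σ : ℕ → Lam} {Γ H : TEnv} {M : Lam}

theorem DerIn.substF_simple {β : STy} (h : DerIn E M (.simple β) Γ)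
    (hE : ∀ z ∈ M.fv, (σ z).fv.biUnion E' = E z) (hσ : DerSubst E' σ Γ H) :
    DerIn E' (M.substF σ) (.simple β) H := by
  induction M generalizing E E' σ Γ H β with
  | var x =>
    rw [DerIn.var_iff.1 h, DerSubst.single_iff, RelSum.singleton_left_iff] at hσ
    exact hσ
  | app M N ihM ihN =>
    obtain ⟨Γ₀, Γ₁, m, hM, hm, hN, rfl⟩ := DerIn.app_iff.1 h
    obtain ⟨H₀, H₁, hσ₀, hσ₁, rfl⟩ := DerSubst.add_iff.1 hσ
    have hEM : ∀ z ∈ M.fv, (σ z).fv.biUnion E' = E z := fun z hz =>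
      hE z (Finset.mem_union_left _ hz)
    have hEN : ∀ z ∈ N.fv, (σ z).fv.biUnion E' = E z := fun z hz =>
      hE z (Finset.mem_union_right _ hz)
    refine DerIn.app_iff.2 ⟨H₀, H₁, m, ihM hM hEM hσ₀, ?_, ?_, rfl⟩
    · rwa [Lam.biUnion_fv_substF hEN]
    · exact hN.trans TEnv.hyps hσ₁ fun α _ G K hG hK => ihN hG hEN hK
  | lam x M ih =>
    obtain ⟨hx, hΓx, X, m, β', rfl, hm, hM⟩ := DerIn.lam_iff.1 h
    rw [Lam.substF]
    have hfresh := Lam.freshVar_notMem ((M.fv.erase x).biUnion fun z => (σ z).fv)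
    generalize Lam.freshVar ((M.fv.erase x).biUnion fun z => (σ z).fv) = y at hfresh ⊢
    have hy : ∀ z ∈ M.fv.erase x, y ∉ (σ z).fv := fun z hz hyz =>
      hfresh (Finset.mem_biUnion.2 ⟨z, hz, hyz⟩)
    have hyΓ : ∀ z ∈ Γ.support, y ∉ (σ z).fv := fun z hz =>
      hy z (h.support_subset_fv hz)
    have hEy : ∀ z ∈ M.fv.erase x, (σ z).fv.biUnion (Function.update E' y X) = E z := by
      intro z hz
      rw [biUnion_update_of_notMem (hy z hz), hE z hz]
    have hEX := Lam.biUnion_fv_update (N := .var y) hEy (X := X) (by simp [Lam.fv])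
    exact DerIn.lam_iff.2 ⟨Lam.mem_fv_substF_update_var hx, hσ.apply_eq_zero hyΓ, X, m, β', rfl, hm,
      ih hM hEX (hσ.lift hΓx hyΓ X m.toM)⟩

theorem DerIn.substF {τ : OTy} (h : DerIn E M τ Γ)
    (hE : ∀ z ∈ M.fv, (σ z).fv.biUnion E' = E z) (hσ : DerSubst E' σ Γ H) :
    DerIn E' (M.substF σ) τ H := by
  cases τ with
  | simple β => exact h.substF_simple hE hσ
  | esum X =>
    obtain ⟨rfl, rfl⟩ := DerIn.esum_iff.1 h
    exact DerIn.esum_iff.2 ⟨DerSubst.zero_iff.1 hσ, (Lam.biUnion_fv_substF hE).symm⟩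

end Substitution

theorem stmt2_general (Γ Γ' : TEnv) (Δ Δ' : VEnv) (M N : Lam) (x : ℕ) (τ : OTy) (m : MTy)
    (hxΓ : Γ x = 0) (hxΔ : x ∉ Δ) (hcoh : VEnv.Coh Δ Δ')
    (h1 : Der (Γ + Finsupp.single x m.toM) (Δ.insert x (VEnv.uni Δ')) M τ)
    (h2 : DerB Γ' Δ' N m) :
    Der (Γ + Γ') (Δ ∪ Δ') (M.subst x N) τ := by
  obtain ⟨E, hE⟩ := VEnv.exists_eq_restrict_keys (Δ ∪ Δ')
  obtain ⟨hΔ, hΔ'⟩ := hcoh.eq_restrict_of_union_eq hE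
  obtain ⟨hx, hkeys⟩ := VEnv.mem_and_keys_eq_erase_of_keys_insert_eq hxΔ h1.keys_eq_fv
  rw [hkeys] at hΔ
  rw [h2.keys_eq_fv] at hΔ'
  subst hΔ hΔ'
  have hM : DerIn (Function.update E x (N.fv.biUnion E)) M τ (Γ + Finsupp.single x m.toM) := by
    rwa [DerIn, ← Finset.insert_erase hx, ← VEnv.insert_restrict, ← VEnv.uni_restrict]
  have hN := ((derB_iff (VEnv.keys_restrict E N.fv)).1 h2).2
  rw [VEnv.restrict_union, ← Lam.fv_subst hx, Lam.subst_eq_substF_update]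
  exact hM.substF (Lam.biUnion_fv_update (fun z _ => by simp [Lam.fv]) rfl)
    ((DerSubst.var E Γ).update hxΓ hN)

/-- Forward Substitution Lemma, case 2.
The non-empty multiset type `ᾱ` is `MTy.mk α₀ l`. -/
theorem stmt2 (Γ Γ' : TEnv) (Δ Δ' : VEnv) (M N : Lam) (x : ℕ) (β α₀ : STy)
    (l : List STy) (hM : M.IsI) (hN : N.IsI)
    (hxΓ : Γ x = 0) (hxΔ : x ∉ Δ) (hcoh : VEnv.Coh Δ Δ')
    (h1 : Der (Γ + Finsupp.single x (MTy.mk α₀ l).toM)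
      (Δ.insert x (VEnv.uni Δ')) M (.simple β))
    (h2 : DerB Γ' Δ' N (.mk α₀ l)) :
    Der (Γ + Γ') (Δ ∪ Δ') (M.subst x N) (.simple β) :=
  stmt2_general Γ Γ' Δ Δ' M N x (.simple β) (.mk α₀ l) hxΓ hxΔ hcoh h1 h2
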